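/- Under the stated hypotheses, if the convex hull K(σ) of σ does not intersect Σ and ‖V‖ < √2·d, then ‖E_A(σ) − E_B(O_d(σ))‖ ≤ sin(arctan(‖V‖/(d − δ_V))) < 1. -/

import Mathlib

/-- `E` is the projection-valued spectral measure of the bounded self-adjoint operator `T`
on the complex Hilbert space `H`: each `E Δ` (for Borel `Δ ⊆ ℝ`) is an orthogonal
projection, `E` is multiplicative and countably additive (in the strong sense), `E ℝ = 1`,
each `E Δ` commutes with `T`, and on the range of `E Δ` the operator `T` has its
approximate point spectrum inside the closure of `Δ` (which uniquely characterizes the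
spectral measure of `T`). -/
structure IsSpectralMeasure {H : Type*} [NormedAddCommGroup H] [InnerProductSpace ℂ H]
    [CompleteSpace H] (T : H →L[ℂ] H) (E : Set ℝ → H →L[ℂ] H) : Prop where
  isSelfAdjoint : ∀ Δ : Set ℝ, MeasurableSet Δ → IsSelfAdjoint (E Δ)
  map_inter : ∀ Δ₁ Δ₂ : Set ℝ, MeasurableSet Δ₁ → MeasurableSet Δ₂ →
    E Δ₁ * E Δ₂ = E (Δ₁ ∩ Δ₂)
  map_univ : E Set.univ = 1
  countably_additive : ∀ Δ : ℕ → Set ℝ, (∀ n, MeasurableSet (Δ n)) →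
    Pairwise (Function.onFun Disjoint Δ) →
    ∀ x : H, HasSum (fun n => E (Δ n) x) (E (⋃ n, Δ n) x)
  commutes : ∀ Δ : Set ℝ, MeasurableSet Δ → Commute T (E Δ)
  spectrum_loc : ∀ Δ : Set ℝ, MeasurableSet Δ → ∀ x : H, E Δ x = x →
    ∀ μ : ℝ, Metric.infDist μ Δ * ‖x‖ ≤ ‖T x - (μ : ℂ) • x‖

/-!
Let `δ (δ + d) = ‖V‖ ^ 2`, let `[a, b]` be the convex hull of `σ`, and let `B = A + V`. Since `V` is
off-diagonal, Young's inequality shows that the quadratic form of `B` is at most `b + δ` on the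
kernel of `E_A (b, ∞)` and at least `b + d` on its range; symmetrically, `E_A [a, ∞)` splits the
form across `(a - d, a - δ)`. Since `‖V‖ < √2 d` gives `δ < d`, these are genuine gaps
`(b + δ, b + d)` and `(a - d, a - δ)` in the spectrum of `B`.

If projections `E` and `F` split the form of `B` across the same gap and `F` commutes with `B`, then
the reflections `J = 2 E - 1` and `K = 2 F - 1` satisfy `J K + K J > 0` by a Lyapunov argument,
which says exactly that `‖E - F‖ < 1 / √2`. Write `P = E_A [a, b]` and `Q = E_B [a - δ, b + δ]` as
differences of half-line projections: the estimates at the two gaps combine to `‖(1 - Q) P‖ < 1`,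
whence `‖P - Q‖ ≤ ‖(1 - P) Q‖`. The latter norm is bounded by comparing, for the centre `c` of
`[a, b]`, the operator `A - c` on the complement of `Ran P` with `B - c` on `Ran Q`.

Finally `Q = E_B (O_d σ)`: a point of `[a, b]` at distance at least `d` from `σ` has distance at
least `2 d` from `Σ`, and `‖V‖ ^ 2 < d * (2 * d)` keeps it out of the spectrum of `B`.
-/

open scoped InnerProductSpace

section StarProjection

variable {𝕜 H : Type*} [RCLike 𝕜] [NormedAddCommGroup H] [InnerProductSpace 𝕜 H]
  [CompleteSpace H] {P Q : H →L[𝕜] H}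

theorem isStarProjection_apply_apply (hP : IsStarProjection P) (x : H) : P (P x) = P x :=
  congrArg (· x) hP.isIdempotentElem.eq

theorem norm_isStarProjection_apply_le (hP : IsStarProjection P) (x : H) : ‖P x‖ ≤ ‖x‖ := by
  simpa using P.le_of_opNorm_le (IsStarProjection.norm_le P hP) x

theorem norm_apply_sq_add_norm_sub_apply_sq (hP : IsStarProjection P) (x : H) :
    ‖P x‖ ^ 2 + ‖x - P x‖ ^ 2 = ‖x‖ ^ 2 := by
  have orthogonal : inner 𝕜 (P x) (x - P x) = 0 := by
    rw [hP.isSelfAdjoint.isSymmetric.apply_clm, map_sub, isStarProjection_apply_apply hP,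
      sub_self, inner_zero_right]
  have h := norm_add_sq_eq_norm_sq_add_norm_sq_of_inner_eq_zero _ _ orthogonal
  rw [add_sub_cancel] at h
  linarith

theorem norm_sub_apply_sq (hP : IsStarProjection P) (hQ : IsStarProjection Q) (x : H) :
    ‖(P - Q) x‖ ^ 2 =
      (‖x‖ ^ 2 - RCLike.re (inner 𝕜 ((2 * P - 1) x) ((2 * Q - 1) x))) / 2 := by
  have hPQ : (2 * P - 1) x - (2 * Q - 1) x = (2 : ℕ) • (P - Q) x := by
    have : 2 * P - 1 - (2 * Q - 1) = (2 : ℕ) • (P - Q) := by noncomm_ring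
    rw [← sub_apply, this, smul_apply]
  have h := norm_sub_sq (𝕜 := 𝕜) ((2 * P - 1) x) ((2 * Q - 1) x)
  rw [hPQ, ContinuousLinearMap.norm_map_of_mem_unitary hP.two_mul_sub_one_mem_unitary,
    ContinuousLinearMap.norm_map_of_mem_unitary hQ.two_mul_sub_one_mem_unitary,
    RCLike.norm_nsmul 𝕜] at h
  simp only [nsmul_eq_mul, Nat.cast_ofNat, mul_pow] at h
  linarith

theorem norm_mul_le_of_forall_apply_eq (hP : IsStarProjection P) {T : H →L[𝕜] H} {s : ℝ}
    (hs : 0 ≤ s) (h : ∀ x, P x = x → ‖T x‖ ≤ s * ‖x‖) : ‖T * P‖ ≤ s := by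
  refine ContinuousLinearMap.opNorm_le_bound _ hs fun x => ?_
  calc ‖T (P x)‖ ≤ s * ‖P x‖ := h _ (isStarProjection_apply_apply hP x)
    _ ≤ s * ‖x‖ := by
      gcongr
      exact norm_isStarProjection_apply_le hP x

theorem norm_sub_le_of_norm_one_sub_mul_le (hP : IsStarProjection P) (hQ : IsStarProjection Q)
    {s : ℝ} (hPQ : ‖(1 - P) * Q‖ ≤ s) (hQP : ‖(1 - Q) * P‖ ≤ s) : ‖P - Q‖ ≤ s := by
  have hs : 0 ≤ s := (norm_nonneg _).trans hPQ
  have hPQ' : ‖P * (1 - Q)‖ ≤ s := by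
    rw [← norm_star, star_mul, hP.isSelfAdjoint.star_eq, hQ.one_sub.isSelfAdjoint.star_eq]
    exact hQP
  refine ContinuousLinearMap.opNorm_le_bound _ hs fun x => ?_
  have in_range : P ((P - Q) x) = (P * (1 - Q)) (x - Q x) := by
    simp [isStarProjection_apply_apply hP, isStarProjection_apply_apply hQ]
  have in_ker : (P - Q) x - P ((P - Q) x) = -((1 - P) * Q) (Q x) := by
    simp [isStarProjection_apply_apply hP, isStarProjection_apply_apply hQ]
  refine le_of_sq_le_sq ?_ (by positivity)
  calc ‖(P - Q) x‖ ^ 2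
      = ‖(P * (1 - Q)) (x - Q x)‖ ^ 2 + ‖((1 - P) * Q) (Q x)‖ ^ 2 := by
        rw [← norm_apply_sq_add_norm_sub_apply_sq hP, in_ker, in_range, norm_neg]
    _ ≤ (s * ‖x - Q x‖) ^ 2 + (s * ‖Q x‖) ^ 2 := by
        gcongr
        exacts [ContinuousLinearMap.le_of_opNorm_le _ hPQ' _,
          ContinuousLinearMap.le_of_opNorm_le _ hPQ _]
    _ = (s * ‖x‖) ^ 2 := by
        rw [mul_pow s ‖x‖, ← norm_apply_sq_add_norm_sub_apply_sq hQ x]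
        ring

/-- `1 - (1 - Q) * P` is invertible, which makes `P` map the range of `Q` onto that of `P`. -/
theorem exists_apply_eq_of_norm_one_sub_mul_lt_one (hP : IsStarProjection P)
    (hQ : IsStarProjection Q) (h : ‖(1 - Q) * P‖ < 1) {x : H} (hx : P x = x) :
    ∃ y, Q y = y ∧ P y = x := by
  obtain ⟨W, hW⟩ := (isUnit_one_sub_of_norm_lt_one h).exists_right_inv
  have hPQP : P * Q * P * W = P := by
    calc P * Q * P * W = (P - P * P + P * Q * P) * W := by rw [hP.isIdempotentElem.eq]; noncomm_ring
      _ = P * ((1 - (1 - Q) * P) * W) := by noncomm_ring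
      _ = P := by rw [hW, mul_one]
  exact ⟨Q (P (W x)), isStarProjection_apply_apply hQ _, (congrArg (· x) hPQP).trans hx⟩

theorem norm_one_sub_mul_le_norm_one_sub_mul_swap (hP : IsStarProjection P)
    (hQ : IsStarProjection Q) (h : ‖(1 - Q) * P‖ < 1) :
    ‖(1 - Q) * P‖ ≤ ‖(1 - P) * Q‖ := by
  rcases le_or_gt 1 ‖(1 - P) * Q‖ with h1 | h1
  · exact h.le.trans h1
  refine norm_mul_le_of_forall_apply_eq (T := 1 - Q) hP (norm_nonneg _) fun x hx => ?_
  obtain ⟨y, hQy, hPy⟩ := exists_apply_eq_of_norm_one_sub_mul_lt_one hP hQ h hx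
  rcases eq_or_ne x 0 with rfl | hx0
  · simp
  have hinner : ‖x‖ ^ 2 ≤ ‖Q x‖ * ‖y‖ := by
    have hxy : inner 𝕜 (Q x) y = inner 𝕜 x x := by
      rw [hQ.isSelfAdjoint.isSymmetric.apply_clm, hQy, ← hx,
        hP.isSelfAdjoint.isSymmetric.apply_clm, hPy, hx]
    simpa [hxy, inner_self_eq_norm_sq_to_K] using norm_inner_le_norm (𝕜 := 𝕜) (Q x) y
  set s := ‖(1 - P) * Q‖
  have hy : (1 - s ^ 2) * ‖y‖ ^ 2 ≤ ‖x‖ ^ 2 := by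
    have hsub : ‖y - x‖ ≤ s * ‖y‖ := by simpa [hQy, hPy] using ((1 - P) * Q).le_opNorm y
    have hsum := norm_apply_sq_add_norm_sub_apply_sq hP y
    rw [hPy] at hsum
    linarith [pow_le_pow_left₀ (norm_nonneg _) hsub 2, mul_pow s ‖y‖ 2]
  have hQx : (1 - s ^ 2) * ‖x‖ ^ 2 ≤ ‖Q x‖ ^ 2 := by
    have hs : 0 ≤ 1 - s ^ 2 := by nlinarith [norm_nonneg ((1 - P) * Q)]
    refine le_of_mul_le_mul_right ?_ (by positivity : 0 < ‖x‖ ^ 2)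
    calc (1 - s ^ 2) * ‖x‖ ^ 2 * ‖x‖ ^ 2 = (1 - s ^ 2) * (‖x‖ ^ 2) ^ 2 := by ring
      _ ≤ (1 - s ^ 2) * (‖Q x‖ * ‖y‖) ^ 2 := by gcongr
      _ = ‖Q x‖ ^ 2 * ((1 - s ^ 2) * ‖y‖ ^ 2) := by ring
      _ ≤ ‖Q x‖ ^ 2 * ‖x‖ ^ 2 := by gcongr
  refine le_of_sq_le_sq ?_ (by positivity)
  have hsum := norm_apply_sq_add_norm_sub_apply_sq hQ x
  change ‖x - Q x‖ ^ 2 ≤ _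
  linarith [mul_pow s ‖x‖ 2]

theorem norm_sub_le_norm_one_sub_mul (hP : IsStarProjection P) (hQ : IsStarProjection Q)
    (h : ‖(1 - Q) * P‖ < 1) : ‖P - Q‖ ≤ ‖(1 - P) * Q‖ :=
  norm_sub_le_of_norm_one_sub_mul_le hP hQ le_rfl
    (norm_one_sub_mul_le_norm_one_sub_mul_swap hP hQ h)

theorem isStarProjection_sub (hP : IsStarProjection P) (hQ : IsStarProjection Q)
    (h : P * Q = P) : IsStarProjection (Q - P) where
  isSelfAdjoint := hQ.isSelfAdjoint.sub hP.isSelfAdjoint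
  isIdempotentElem := by
    have h' : Q * P = P := by
      simpa [hP.isSelfAdjoint.star_eq, hQ.isSelfAdjoint.star_eq] using congrArg star h
    rw [IsIdempotentElem, sub_mul, mul_sub, mul_sub, h, h', hP.isIdempotentElem.eq,
      hQ.isIdempotentElem.eq, sub_self, sub_zero]

/-- A vector `x` in the range of `E₂ - E₁` has `E₁ x = 0` and `E₂ x = x`, so `F₁` and `1 - F₂`, the
two components of `1 - (F₂ - F₁)`, act on it as `F₁ - E₁` and `E₂ - F₂`. -/
theorem norm_one_sub_sub_mul_sub_sq_le {E₁ E₂ F₁ F₂ : H →L[𝕜] H} (hE₁ : IsStarProjection E₁)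
    (hE₂ : IsStarProjection E₂) (hE : E₁ * E₂ = E₁) (hF₁ : IsStarProjection F₁)
    (hF : F₁ * F₂ = F₁) :
    ‖(1 - (F₂ - F₁)) * (E₂ - E₁)‖ ^ 2 ≤ ‖E₁ - F₁‖ ^ 2 + ‖E₂ - F₂‖ ^ 2 := by
  have hE' := isStarProjection_sub hE₁ hE₂ hE
  refine (pow_le_pow_left₀ (norm_nonneg _) (norm_mul_le_of_forall_apply_eq hE'
    (Real.sqrt_nonneg _) fun x hx => ?_) 2).trans_eq (Real.sq_sqrt (by positivity))
  have hE₁x : E₁ x = 0 := by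
    have h : E₁ * (E₂ - E₁) = 0 := by rw [mul_sub, hE, hE₁.isIdempotentElem.eq, sub_self]
    rw [← hx]
    exact congrArg (· x) h
  have hE₂x : E₂ x = x := by simpa [hE₁x] using hx
  have hF₁F₂ : F₁ (F₂ x) = F₁ x := congrArg (· x) hF
  refine le_of_sq_le_sq ?_ (by positivity)
  calc ‖(1 - (F₂ - F₁)) x‖ ^ 2 = ‖F₁ x‖ ^ 2 + ‖x - F₂ x‖ ^ 2 := by
        rw [← norm_apply_sq_add_norm_sub_apply_sq hF₁ ((1 - (F₂ - F₁)) x)]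
        simp [hF₁F₂, isStarProjection_apply_apply hF₁, sub_sub]
    _ = ‖(E₁ - F₁) x‖ ^ 2 + ‖(E₂ - F₂) x‖ ^ 2 := by simp [hE₁x, hE₂x]
    _ ≤ (‖E₁ - F₁‖ * ‖x‖) ^ 2 + (‖E₂ - F₂‖ * ‖x‖) ^ 2 := by
        gcongr <;> exact ContinuousLinearMap.le_opNorm _ _
    _ = _ := by
        rw [mul_pow, mul_pow, mul_pow, Real.sq_sqrt (by positivity)]
        ring

end StarProjection

section Trigonometry

theorem mul_tan_half_arctan_mul_add {v d δ : ℝ} (hd : d ≠ 0)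
    (hδ : δ = v * Real.tan (Real.arctan (2 * v / d) / 2)) : δ * (δ + d) = v ^ 2 := by
  set θ := Real.arctan (2 * v / d) / 2 with hθ
  have h₁ := Real.arctan_lt_pi_div_two (2 * v / d)
  have h₂ := Real.neg_pi_div_two_lt_arctan (2 * v / d)
  have hc : 0 < Real.cos θ := Real.cos_pos_of_mem_Ioo ⟨by linarith, by linarith⟩
  have hc₂ : 0 < Real.cos (2 * θ) := Real.cos_pos_of_mem_Ioo ⟨by linarith, by linarith⟩
  have htan : Real.tan (2 * θ) = 2 * v / d := by
    rw [show 2 * θ = Real.arctan (2 * v / d) by rw [hθ]; ring, Real.tan_arctan]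
  rw [Real.tan_eq_sin_div_cos, div_eq_div_iff hc₂.ne' hd, Real.sin_two_mul,
    Real.cos_two_mul'] at htan
  rw [Real.tan_eq_sin_div_cos] at hδ
  have hδc : δ * Real.cos θ = v * Real.sin θ := by
    rw [hδ]
    field_simp
  have h : Real.cos θ ^ 2 * (δ * (δ + d)) = Real.cos θ ^ 2 * v ^ 2 := by
    linear_combination (δ * Real.cos θ + v * Real.sin θ + d * Real.cos θ) * hδc + v / 2 * htan
  exact mul_left_cancel₀ (by positivity) h

theorem mul_tan_half_arctan_nonneg {v d : ℝ} (hv : 0 ≤ v) (hd : 0 ≤ d) :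
    0 ≤ v * Real.tan (Real.arctan (2 * v / d) / 2) := by
  have h₁ := Real.arctan_lt_pi_div_two (2 * v / d)
  have h₂ : 0 ≤ Real.arctan (2 * v / d) := Real.arctan_nonneg.2 (by positivity)
  exact mul_nonneg hv (Real.tan_nonneg_of_nonneg_of_le_pi_div_two (by linarith) (by linarith))

theorem sin_arctan_lt_one (x : ℝ) : Real.sin (Real.arctan x) < 1 := by
  nlinarith [Real.sin_sq_add_cos_sq (Real.arctan x), Real.cos_arctan_pos x]

theorem sq_mul_one_sub_sin_arctan_div_sq (v : ℝ) {g : ℝ} (hg : g ≠ 0) :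
    v ^ 2 * (1 - Real.sin (Real.arctan (v / g)) ^ 2) =
      (g * Real.sin (Real.arctan (v / g))) ^ 2 := by
  have h := Real.tan_arctan (v / g)
  rw [Real.tan_eq_sin_div_cos, div_eq_div_iff (Real.cos_arctan_pos _).ne' hg] at h
  rw [← Real.cos_sq', mul_comm g, h]
  ring

end Trigonometry

section OffDiagonal

variable {𝕜 H : Type*} [RCLike 𝕜] [NormedAddCommGroup H] [InnerProductSpace 𝕜 H]
  [CompleteSpace H] {A V P Q : H →L[𝕜] H} {s t : ℝ}

theorem norm_apply_apply_le_of_mul_mul_eq_zero (hP : IsStarProjection P) (hAP : Commute A P)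
    (hV : P * V * P = 0) (x : H) :
    ‖A (P x)‖ ≤ ‖P ((A + V) x)‖ + ‖V‖ * ‖x - P x‖ := by
  have split : A (P x) = P ((A + V) x) - P (V (x - P x)) := by
    have hAPx : A (P x) = P (A x) := congrArg (· x) hAP.eq
    have hVx : P (V (P x)) = 0 := congrArg (· x) hV
    simp [hAPx, hVx]
  calc ‖A (P x)‖ ≤ ‖P ((A + V) x)‖ + ‖P (V (x - P x))‖ := split ▸ norm_sub_le _ _
    _ ≤ ‖P ((A + V) x)‖ + ‖V‖ * ‖x - P x‖ := by
      gcongr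
      exact (norm_isStarProjection_apply_le hP _).trans (V.le_opNorm _)

theorem exists_pos_mul_norm_le_norm_add_apply (hP : IsStarProjection P) (hAP : Commute A P)
    (hV : P * V * P = 0) (hV' : (1 - P) * V * (1 - P) = 0) (hs0 : 0 < s)
    (hs : ∀ x, P x = x → s * ‖x‖ ≤ ‖A x‖) (ht : ∀ x, P x = 0 → t * ‖x‖ ≤ ‖A x‖)
    (hst : ‖V‖ ^ 2 < s * t) : ∃ c > 0, ∀ x, c * ‖x‖ ≤ ‖(A + V) x‖ := by
  have ht0 : 0 < t := pos_of_mul_pos_right ((sq_nonneg _).trans_lt hst) hs0.le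
  refine ⟨(s * t - ‖V‖ ^ 2) / (s + t + 2 * ‖V‖), div_pos (by linarith) (by positivity),
    fun x => ?_⟩
  have hp : s * ‖P x‖ ≤ ‖(A + V) x‖ + ‖V‖ * ‖x - P x‖ :=
    (hs _ (isStarProjection_apply_apply hP x)).trans <|
      (norm_apply_apply_le_of_mul_mul_eq_zero hP hAP hV x).trans <| by
        gcongr
        exact norm_isStarProjection_apply_le hP _
  have hn : t * ‖x - P x‖ ≤ ‖(A + V) x‖ + ‖V‖ * ‖P x‖ := by
    have h := norm_apply_apply_le_of_mul_mul_eq_zero hP.one_sub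
      ((Commute.one_right A).sub_right hAP) hV' x
    have hker : P (x - P x) = 0 := by rw [map_sub, isStarProjection_apply_apply hP, sub_self]
    rw [sub_apply, one_apply_eq_self, sub_sub_cancel] at h
    exact (ht _ hker).trans (h.trans (by gcongr; exact norm_isStarProjection_apply_le hP.one_sub _))
  rw [div_mul_eq_mul_div, div_le_iff₀ (by positivity)]
  have hx : ‖x‖ ≤ ‖P x‖ + ‖x - P x‖ := by simpa using norm_add_le (P x) (x - P x)
  calc (s * t - ‖V‖ ^ 2) * ‖x‖ ≤ (s * t - ‖V‖ ^ 2) * (‖P x‖ + ‖x - P x‖) := by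
        gcongr
    _ ≤ ‖(A + V) x‖ * (s + t + 2 * ‖V‖) := by
        linear_combination (t + ‖V‖) * hp + (s + ‖V‖) * hn

theorem norm_one_sub_mul_le_sin_arctan (hP : IsStarProjection P) (hQ : IsStarProjection Q)
    (hAP : Commute A P) (hAVQ : Commute (A + V) Q) (hV : (1 - P) * V * (1 - P) = 0)
    (hs0 : 0 ≤ s) (hst : s < t) (ht : ∀ x, P x = 0 → t * ‖x‖ ≤ ‖A x‖)
    (hs : ∀ x, Q x = x → ‖(A + V) x‖ ≤ s * ‖x‖) :
    ‖(1 - P) * Q‖ ≤ Real.sin (Real.arctan (‖V‖ / (t - s))) := by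
  set κ := Real.sin (Real.arctan (‖V‖ / (t - s)))
  have ht0 : 0 < t := hs0.trans_lt hst
  have hg : 0 < t - s := sub_pos.2 hst
  have : 0 ≤ κ := Real.sin_arctan_nonneg.2 (by positivity)
  have component_le (x : H) (hx : Q x = x) :
      t * ‖x - P x‖ ≤ ‖(1 - P) * Q‖ * (s * ‖x‖) + ‖V‖ * ‖P x‖ := by
    have hker : P (x - P x) = 0 := by rw [map_sub, isStarProjection_apply_apply hP, sub_self]
    have h := norm_apply_apply_le_of_mul_mul_eq_zero hP.one_sub
      ((Commute.one_right A).sub_right hAP) hV x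
    have hQx : (A + V) x = Q ((A + V) x) := by
      nth_rw 1 [← hx]
      exact congrArg (· x) hAVQ.eq
    rw [sub_apply, one_apply_eq_self, sub_sub_cancel, hQx] at h
    refine (ht _ hker).trans (h.trans ?_)
    gcongr
    exact (((1 - P) * Q).le_opNorm _).trans (by gcongr; exact hs x hx)
  by_contra! hlt
  have norm_le : ‖(1 - P) * Q‖ ≤ (‖(1 - P) * Q‖ * s + (t - s) * κ) / t := by
    refine norm_mul_le_of_forall_apply_eq hQ (by positivity) fun x hx => ?_
    rw [div_mul_eq_mul_div, le_div_iff₀' ht0]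
    change t * ‖x - P x‖ ≤ _
    rcases le_total ‖x - P x‖ (κ * ‖x‖) with h | h
    · calc t * ‖x - P x‖ ≤ t * (κ * ‖x‖) := by gcongr
        _ = (κ * s + (t - s) * κ) * ‖x‖ := by ring
        _ ≤ (‖(1 - P) * Q‖ * s + (t - s) * κ) * ‖x‖ := by gcongr
    · have hPx : ‖V‖ * ‖P x‖ ≤ (t - s) * κ * ‖x‖ := by
        refine le_of_sq_le_sq ?_ (by positivity)
        have := norm_apply_sq_add_norm_sub_apply_sq hP x
        calc (‖V‖ * ‖P x‖) ^ 2 ≤ ‖V‖ ^ 2 * (1 - κ ^ 2) * ‖x‖ ^ 2 := by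
              rw [mul_pow, mul_assoc]
              gcongr
              linarith [pow_le_pow_left₀ (by positivity) h 2, mul_pow κ ‖x‖ 2]
          _ = ((t - s) * κ * ‖x‖) ^ 2 := by
              rw [sq_mul_one_sub_sin_arctan_div_sq _ hg.ne']
              ring
      linarith [component_le x hx]
  rw [le_div_iff₀ ht0] at norm_le
  nlinarith

end OffDiagonal

section Positivity

variable {H : Type*} [NormedAddCommGroup H] [InnerProductSpace ℂ H]

theorem reApplyInnerSelf_sub_algebraMap (S : H →L[ℂ] H) (l : ℝ) (x : H) :
    (S - algebraMap ℝ (H →L[ℂ] H) l).reApplyInnerSelf x =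
      S.reApplyInnerSelf x - l * ‖x‖ ^ 2 := by
  have hx : RCLike.re ⟪l • x, x⟫_ℂ = l * ‖x‖ ^ 2 := by
    rw [RCLike.real_smul_eq_coe_smul (K := ℂ), inner_smul_left, RCLike.conj_ofReal,
      RCLike.re_ofReal_mul, inner_self_eq_norm_sq]
  rw [ContinuousLinearMap.reApplyInnerSelf_apply, sub_apply, inner_sub_left, map_sub,
    Algebra.algebraMap_eq_smul_one, smul_apply, one_apply_eq_self, hx,
    ContinuousLinearMap.reApplyInnerSelf_apply]

variable [CompleteSpace H] {S J K C Y : H →L[ℂ] H} {m : ℝ}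

theorem isUnit_of_le_re_inner_apply_apply (hS : IsSelfAdjoint S) (hm : 0 < m)
    (h : ∀ x, m * ‖x‖ ^ 2 ≤ RCLike.re ⟪C x, S x⟫_ℂ) : IsUnit S := by
  have hSC : IsUnit (S * C) := by
    refine ContinuousLinearMap.isUnit_of_forall_le_norm_inner_map _ (c := ⟨m, hm.le⟩) hm fun x => ?_
    calc ‖x‖ ^ 2 * m ≤ RCLike.re ⟪C x, S x⟫_ℂ := by linarith [h x]
      _ = RCLike.re ⟪S (C x), x⟫_ℂ := by rw [hS.isSymmetric.apply_clm]
      _ ≤ ‖⟪(S * C) x, x⟫_ℂ‖ := RCLike.re_le_norm _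
  obtain ⟨W, hW⟩ := hSC.exists_right_inv
  rw [mul_assoc] at hW
  have hW' : star (C * W) * S = 1 := by
    simpa only [star_mul _ (C * W), hS.star_eq, star_one] using congrArg star hW
  exact isUnit_iff_exists.2 ⟨C * W, hW, left_inv_eq_right_inv hW' hW ▸ hW'⟩

theorem notMem_spectrum_of_le_re_inner (hS : IsSelfAdjoint S) {l : ℝ} (hm : 0 < m)
    (h : ∀ x, m * ‖x‖ ^ 2 ≤ RCLike.re ⟪C x, (S - algebraMap ℝ (H →L[ℂ] H) l) x⟫_ℂ) :
    l ∉ spectrum ℝ S := by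
  rw [spectrum.notMem_iff, ← neg_sub, IsUnit.neg_iff]
  exact isUnit_of_le_re_inner_apply_apply (hS.sub (.algebraMap _ (.all l))) hm h

theorem notMem_spectrum_of_le_norm_apply (hS : IsSelfAdjoint S) {l : ℝ} (hm : 0 < m)
    (h : ∀ x, m * ‖x‖ ≤ ‖(S - algebraMap ℝ (H →L[ℂ] H) l) x‖) : l ∉ spectrum ℝ S :=
  notMem_spectrum_of_le_re_inner hS (pow_pos hm 2) fun x => by
    rw [inner_self_eq_norm_sq, ← mul_pow]
    exact pow_le_pow_left₀ (by positivity) (h x) 2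

/-- For `μ < m / (‖C‖ + 1)` the form `re ⟪C x, (Y - μ) x⟫` is still coercive, so `μ` is not in the
spectrum of `Y`. -/
theorem exists_pos_forall_mul_norm_sq_le_reApplyInnerSelf (hC : ∀ x, 0 ≤ C.reApplyInnerSelf x)
    (hY : IsSelfAdjoint Y) (hm : 0 < m) (h : ∀ x, m * ‖x‖ ^ 2 ≤ RCLike.re ⟪C x, Y x⟫_ℂ) :
    ∃ η > 0, ∀ x, η * ‖x‖ ^ 2 ≤ Y.reApplyInnerSelf x := by
  have le_of_mem_spectrum : ∀ μ ∈ spectrum ℝ Y, m / (‖C‖ + 1) ≤ μ := by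
    intro μ
    contrapose!
    intro hμ
    rw [lt_div_iff₀ (by positivity)] at hμ
    have hμC : max μ 0 * ‖C‖ < m := by
      rcases max_cases μ 0 with ⟨hmax, h0⟩ | ⟨hmax, -⟩ <;> rw [hmax] <;> nlinarith [norm_nonneg C]
    refine notMem_spectrum_of_le_re_inner (C := C) hY (sub_pos.2 hμC) fun x => ?_
    have hCx : C.reApplyInnerSelf x ≤ ‖C‖ * ‖x‖ ^ 2 :=
      (re_inner_le_norm _ _).trans (by nlinarith [C.le_opNorm x, norm_nonneg x])
    have hμCx : μ * C.reApplyInnerSelf x ≤ max μ 0 * (‖C‖ * ‖x‖ ^ 2) :=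
      (mul_le_mul_of_nonneg_right (le_max_left _ _) (hC x)).trans
        (mul_le_mul_of_nonneg_left hCx (le_max_right _ _))
    have shift : RCLike.re ⟪C x, (Y - algebraMap ℝ (H →L[ℂ] H) μ) x⟫_ℂ =
        RCLike.re ⟪C x, Y x⟫_ℂ - μ * C.reApplyInnerSelf x := by
      simp [Algebra.algebraMap_eq_smul_one, ContinuousLinearMap.reApplyInnerSelf_apply]
    rw [shift]
    linarith [h x]
  have hpos := (algebraMap_le_of_le_spectrum le_of_mem_spectrum).re_inner_nonneg_left
  exact ⟨m / (‖C‖ + 1), by positivity, fun x =>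
    sub_nonneg.1 ((hpos x).trans_eq (reApplyInnerSelf_sub_algebraMap Y _ x))⟩

/-- `Y = J * K + K * J` solves the Lyapunov inequality for `C = S * K`, whose form is nonnegative,
and `re ⟪Y x, x⟫ = 2 re ⟪J x, K x⟫`. -/
theorem exists_pos_forall_mul_norm_sq_le_re_inner (hS : IsSelfAdjoint S) (hJ : IsSelfAdjoint J)
    (hK : IsSelfAdjoint K) (hKu : K ∈ unitary (H →L[ℂ] H)) (hSK : Commute S K) (hm : 0 < m)
    (hSJ : ∀ x, m * ‖x‖ ^ 2 ≤ RCLike.re ⟪J x, S x⟫_ℂ)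
    (hSK' : ∀ x, 0 ≤ RCLike.re ⟪K x, S x⟫_ℂ) :
    ∃ η > 0, ∀ x, η * ‖x‖ ^ 2 ≤ RCLike.re ⟪J x, K x⟫_ℂ := by
  have hSKx (x : H) : S (K x) = K (S x) := congrArg (· x) hSK.eq
  have hY : IsSelfAdjoint (J * K + K * J) := by
    rw [isSelfAdjoint_iff, star_add, star_mul, star_mul, hJ.star_eq, hK.star_eq, add_comm]
  have hC (x : H) : 0 ≤ (S * K).reApplyInnerSelf x := by
    rw [ContinuousLinearMap.reApplyInnerSelf_apply, mul_apply_eq_comp, hS.isSymmetric.apply_clm]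
    exact hSK' x
  have lyapunov (x : H) : 2 * m * ‖x‖ ^ 2 ≤ RCLike.re ⟪(S * K) x, (J * K + K * J) x⟫_ℂ := by
    have hJK : m * ‖x‖ ^ 2 ≤ RCLike.re ⟪S (K x), J (K x)⟫_ℂ := by
      rw [inner_re_symm, ← ContinuousLinearMap.norm_map_of_mem_unitary hKu x]
      exact hSJ (K x)
    have hKJ : m * ‖x‖ ^ 2 ≤ RCLike.re ⟪S (K x), K (J x)⟫_ℂ := by
      rw [hSKx, ContinuousLinearMap.inner_map_map_of_mem_unitary hKu, inner_re_symm]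
      exact hSJ x
    calc 2 * m * ‖x‖ ^ 2 ≤ RCLike.re ⟪S (K x), J (K x)⟫_ℂ + RCLike.re ⟪S (K x), K (J x)⟫_ℂ := by
          linarith
      _ = RCLike.re ⟪(S * K) x, (J * K + K * J) x⟫_ℂ := by
          rw [← map_add, ← inner_add_right]
          rfl
  obtain ⟨η, hη, h⟩ :=
    exists_pos_forall_mul_norm_sq_le_reApplyInnerSelf hC hY (by positivity) lyapunov
  refine ⟨η / 2, half_pos hη, fun x => ?_⟩
  have hx : (J * K + K * J).reApplyInnerSelf x = 2 * RCLike.re ⟪J x, K x⟫_ℂ := by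
    rw [ContinuousLinearMap.reApplyInnerSelf_apply, add_apply, inner_add_left, map_add,
      mul_apply_eq_comp, mul_apply_eq_comp, hJ.isSymmetric.apply_clm (K x) x,
      hK.isSymmetric.apply_clm (J x) x, inner_re_symm (K x)]
    ring
  linarith [h x]

end Positivity

/-- The orthogonal projection `E` splits the quadratic form of `S`: the form is bounded above by
`α` on the kernel of `E` and bounded below by `β` on the range of `E`. For `α < β` this replaces
the spectral subspace of `S` above a gap `(α, β)` without referring to a spectral measure. -/
structure SeparatesForm {H : Type*} [NormedAddCommGroup H] [InnerProductSpace ℂ H]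
    [CompleteSpace H] (S E : H →L[ℂ] H) (α β : ℝ) : Prop where
  isStarProjection : IsStarProjection E
  reApplyInnerSelf_le : ∀ x, E x = 0 → S.reApplyInnerSelf x ≤ α * ‖x‖ ^ 2
  le_reApplyInnerSelf : ∀ x, E x = x → β * ‖x‖ ^ 2 ≤ S.reApplyInnerSelf x

namespace SeparatesForm

variable {H : Type*} [NormedAddCommGroup H] [InnerProductSpace ℂ H] [CompleteSpace H]
  {S E F : H →L[ℂ] H} {α β l : ℝ}

theorem sub_algebraMap (h : SeparatesForm S E α β) (l : ℝ) :
    SeparatesForm (S - algebraMap ℝ (H →L[ℂ] H) l) E (α - l) (β - l) := by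
  refine ⟨h.isStarProjection, fun x hx => ?_, fun x hx => ?_⟩ <;>
    rw [reApplyInnerSelf_sub_algebraMap]
  · linarith [h.reApplyInnerSelf_le x hx]
  · linarith [h.le_reApplyInnerSelf x hx]

theorem min_mul_norm_sq_le_re_inner (h : SeparatesForm S E α β) (hS : IsSelfAdjoint S) (x : H) :
    min (-α) β * ‖x‖ ^ 2 ≤ RCLike.re ⟪(2 * E - 1) x, S x⟫_ℂ := by
  have hE := h.isStarProjection
  have hker : E (x - E x) = 0 := by rw [map_sub, isStarProjection_apply_apply hE, sub_self]
  have hlow := h.le_reApplyInnerSelf _ (isStarProjection_apply_apply hE x)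
  have hup := h.reApplyInnerSelf_le _ hker
  have cross : RCLike.re ⟪(2 * E - 1) x, S x⟫_ℂ =
      S.reApplyInnerSelf (E x) - S.reApplyInnerSelf (x - E x) := by
    have hsymm : RCLike.re ⟪S (E x), x - E x⟫_ℂ = RCLike.re ⟪S (x - E x), E x⟫_ℂ := by
      rw [hS.isSymmetric.apply_clm, inner_re_symm]
    have hJx : (2 * E - 1) x = E x - (x - E x) := by
      simp only [two_mul, sub_apply, add_apply, one_apply_eq_self]
      abel
    have hSx : S x = S (E x) + S (x - E x) := by rw [← map_add, add_sub_cancel]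
    rw [hJx, hSx, inner_re_symm]
    simp only [inner_add_left, inner_sub_right, map_add, map_sub,
      ContinuousLinearMap.reApplyInnerSelf_apply] at hsymm ⊢
    linarith
  rw [cross, ← norm_apply_sq_add_norm_sub_apply_sq hE x]
  nlinarith [min_le_left (-α) β, min_le_right (-α) β, sq_nonneg ‖E x‖, sq_nonneg ‖x - E x‖]

theorem notMem_spectrum (h : SeparatesForm S E α β) (hS : IsSelfAdjoint S)
    (hl : l ∈ Set.Ioo α β) : l ∉ spectrum ℝ S :=
  notMem_spectrum_of_le_re_inner hS (lt_min (neg_pos.2 (sub_neg.2 hl.1)) (sub_pos.2 hl.2))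
    ((h.sub_algebraMap l).min_mul_norm_sq_le_re_inner (hS.sub (.algebraMap _ (.all l))))

theorem norm_sub_sq_lt_half (hE : SeparatesForm S E α β) (hF : SeparatesForm S F l l)
    (hS : IsSelfAdjoint S) (hSF : Commute S F) (hl : l ∈ Set.Ioo α β) : ‖E - F‖ ^ 2 < 1 / 2 := by
  have isSelfAdjoint_reflection {G : H →L[ℂ] H} (hG : IsStarProjection G) :
      IsSelfAdjoint (2 * G - 1) := by
    rw [two_mul]
    exact (hG.isSelfAdjoint.add hG.isSelfAdjoint).sub (.one _)
  have hSl : IsSelfAdjoint (S - algebraMap ℝ (H →L[ℂ] H) l) := hS.sub (.algebraMap _ (.all l))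
  have hSK : Commute (S - algebraMap ℝ (H →L[ℂ] H) l) (2 * F - 1) :=
    .sub_left (.sub_right ((Commute.ofNat_right S 2).mul_right hSF) (.one_right S))
      (Algebra.commutes _ _)
  obtain ⟨η, hη, h⟩ := exists_pos_forall_mul_norm_sq_le_re_inner hSl
    (isSelfAdjoint_reflection hE.isStarProjection) (isSelfAdjoint_reflection hF.isStarProjection)
    hF.isStarProjection.two_mul_sub_one_mem_unitary hSK
    (lt_min (neg_pos.2 (sub_neg.2 hl.1)) (sub_pos.2 hl.2))
    ((hE.sub_algebraMap l).min_mul_norm_sq_le_re_inner hSl)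
    (fun x => by simpa using (hF.sub_algebraMap l).min_mul_norm_sq_le_re_inner hSl x)
  have norm_apply_sq_le (x : H) : ‖(E - F) x‖ ^ 2 ≤ (1 - η) / 2 * ‖x‖ ^ 2 := by
    linarith [h x, norm_sub_apply_sq hE.isStarProjection hF.isStarProjection x]
  have hnorm : ‖E - F‖ ≤ √((1 - η) / 2) :=
    ContinuousLinearMap.opNorm_le_bound _ (Real.sqrt_nonneg _) fun x => by
      rw [← Real.sqrt_sq (norm_nonneg x), ← Real.sqrt_mul' _ (sq_nonneg _)]
      exact Real.le_sqrt_of_sq_le (norm_apply_sq_le x)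
  rw [← Real.lt_sqrt (norm_nonneg _)]
  exact hnorm.trans_lt ((Real.sqrt_lt_sqrt_iff_of_pos (by norm_num)).2 (by linarith))

end SeparatesForm

section FormBounds

variable {𝕜 H : Type*} [RCLike 𝕜] [NormedAddCommGroup H] [InnerProductSpace 𝕜 H]

theorem re_inner_nonneg_of_forall_mul_norm_le {x y : H}
    (h : ∀ M : ℝ, 0 < M → M * ‖x‖ ≤ ‖y + (M : 𝕜) • x‖) : 0 ≤ RCLike.re ⟪y, x⟫_𝕜 := by
  by_contra! hneg
  set ε := -RCLike.re ⟪y, x⟫_𝕜 with hε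
  have hε0 : 0 < ε := neg_pos.2 hneg
  have hM : 0 < (‖y‖ ^ 2 + 1) / ε := by positivity
  have hsq := pow_le_pow_left₀ (by positivity) (h _ hM) 2
  rw [norm_add_sq (𝕜 := 𝕜), inner_smul_right, RCLike.re_ofReal_mul, norm_smul, RCLike.norm_ofReal,
    abs_of_pos hM, ← neg_eq_iff_eq_neg.2 hε, mul_neg, div_mul_cancel₀ _ hε0.ne'] at hsq
  linarith [sq_nonneg ‖y‖]

theorem norm_mul_le_of_abs_reApplyInnerSelf_le [CompleteSpace H] {S P : H →L[𝕜] H}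
    (hS : IsSelfAdjoint S) (hP : IsStarProjection P) (hSP : Commute S P) {s : ℝ} (hs : 0 ≤ s)
    (h : ∀ x, P x = x → |S.reApplyInnerSelf x| ≤ s * ‖x‖ ^ 2) : ‖S * P‖ ≤ s := by
  have hsymm : (S * P : H →L[𝕜] H).IsSymmetric :=
    (hS.commute_iff hP.isSelfAdjoint |>.1 hSP).isSymmetric
  rw [ContinuousLinearMap.norm_eq_iSup_rayleighQuotient _ hsymm]
  refine ciSup_le fun x => ?_
  have compress : (S * P).reApplyInnerSelf x = S.reApplyInnerSelf (P x) := by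
    have hSPx : S (P x) = P (S (P x)) := by
      nth_rw 1 [← isStarProjection_apply_apply hP x]
      exact congrArg (· (P x)) hSP.eq
    rw [ContinuousLinearMap.reApplyInnerSelf_apply, mul_apply_eq_comp, hSPx,
      hP.isSelfAdjoint.isSymmetric.apply_clm, ContinuousLinearMap.reApplyInnerSelf_apply]
  rw [ContinuousLinearMap.rayleighQuotient, compress, abs_div, abs_sq]
  refine div_le_of_le_mul₀ (by positivity) hs ((h _ (isStarProjection_apply_apply hP x)).trans ?_)
  gcongr
  exact norm_isStarProjection_apply_le hP x

end FormBounds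

namespace IsSpectralMeasure

variable {H : Type*} [NormedAddCommGroup H] [InnerProductSpace ℂ H] [CompleteSpace H]
  {T : H →L[ℂ] H} {E : Set ℝ → H →L[ℂ] H} {Δ Δ' : Set ℝ} {l s α β : ℝ} {x : H}

theorem isStarProjection (hE : IsSpectralMeasure T E) (hΔ : MeasurableSet Δ) :
    IsStarProjection (E Δ) where
  isSelfAdjoint := hE.isSelfAdjoint Δ hΔ
  isIdempotentElem := (hE.map_inter Δ Δ hΔ hΔ).trans (by rw [Set.inter_self])

theorem map_empty (hE : IsSpectralMeasure T E) : E ∅ = 0 := by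
  ext x
  exact (summable_const_iff _).1 (hE.countably_additive (fun _ => ∅) (fun _ => .empty)
    (fun _ _ _ => disjoint_bot_left) x).summable

theorem map_mul_map_of_subset (hE : IsSpectralMeasure T E) (hΔ : MeasurableSet Δ)
    (hΔ' : MeasurableSet Δ') (h : Δ ⊆ Δ') : E Δ * E Δ' = E Δ := by
  rw [hE.map_inter Δ Δ' hΔ hΔ', Set.inter_eq_left.2 h]

theorem map_mul_map_of_disjoint (hE : IsSpectralMeasure T E) (hΔ : MeasurableSet Δ)
    (hΔ' : MeasurableSet Δ') (h : Disjoint Δ Δ') : E Δ * E Δ' = 0 := by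
  rw [hE.map_inter Δ Δ' hΔ hΔ', h.inter_eq, hE.map_empty]

open scoped Classical in
/-- The `H`-valued vector measure `Δ ↦ E Δ x`, extended by `0` to sets that are not measurable. -/
noncomputable def vectorMeasure (hE : IsSpectralMeasure T E) (x : H) :
    MeasureTheory.VectorMeasure ℝ H where
  measureOf' Δ := if MeasurableSet Δ then E Δ x else 0
  empty' := by simp [hE.map_empty]
  not_measurable' _ h := if_neg h
  m_iUnion' f hf hd := by simpa [hf, MeasurableSet.iUnion hf] using hE.countably_additive f hf hd x

theorem vectorMeasure_apply (hE : IsSpectralMeasure T E) (hΔ : MeasurableSet Δ) (x : H) :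
    hE.vectorMeasure x Δ = E Δ x :=
  if_pos hΔ

theorem map_union (hE : IsSpectralMeasure T E) (hΔ : MeasurableSet Δ) (hΔ' : MeasurableSet Δ')
    (h : Disjoint Δ Δ') : E (Δ ∪ Δ') = E Δ + E Δ' := by
  ext x
  simpa [vectorMeasure_apply, hΔ, hΔ'] using
    MeasureTheory.VectorMeasure.of_union (v := hE.vectorMeasure x) h hΔ hΔ'

theorem map_compl (hE : IsSpectralMeasure T E) (hΔ : MeasurableSet Δ) : E Δᶜ = 1 - E Δ := by
  rw [eq_sub_iff_add_eq', ← hE.map_union hΔ hΔ.compl disjoint_compl_right, Set.union_compl_self,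
    hE.map_univ]

theorem map_sdiff (hE : IsSpectralMeasure T E) (hΔ : MeasurableSet Δ) (hΔ' : MeasurableSet Δ')
    (h : Δ ⊆ Δ') : E (Δ' \ Δ) = E Δ' - E Δ := by
  rw [eq_sub_iff_add_eq', ← hE.map_union hΔ (hΔ'.diff hΔ) Set.disjoint_sdiff_right,
    Set.union_sdiff_cancel h]

theorem map_compl_apply_of_apply_eq_zero (hE : IsSpectralMeasure T E) (hΔ : MeasurableSet Δ)
    (hx : E Δ x = 0) : E Δᶜ x = x := by
  rw [hE.map_compl hΔ, sub_apply, hx, sub_zero, one_apply_eq_self]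

theorem map_eq_zero_of_subset (hE : IsSpectralMeasure T E) (hΔ : MeasurableSet Δ)
    (hΔ' : MeasurableSet Δ') (h : Δ ⊆ Δ') (h0 : E Δ' = 0) : E Δ = 0 := by
  rw [← hE.map_mul_map_of_subset hΔ hΔ' h, h0, mul_zero]

theorem map_iUnion_eq_zero (hE : IsSpectralMeasure T E) {Δ : ℕ → Set ℝ}
    (hΔ : ∀ n, MeasurableSet (Δ n)) (h : ∀ n, E (Δ n) = 0) : E (⋃ n, Δ n) = 0 := by
  ext x
  have hdisj := hE.countably_additive _ (MeasurableSet.disjointed hΔ) (disjoint_disjointed Δ) x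
  have hnull (n : ℕ) : E (disjointed Δ n) = 0 :=
    hE.map_eq_zero_of_subset (.disjointed hΔ n) (hΔ n) (disjointed_subset Δ n) (h n)
  simp only [hnull, zero_apply, iUnion_disjointed] at hdisj
  exact hdisj.unique hasSum_zero

theorem eq_zero_of_map_empty_apply_eq (hE : IsSpectralMeasure T E) (hx : E ∅ x = x) : x = 0 := by
  rw [← hx, hE.map_empty, zero_apply]

theorem mul_norm_le_norm_of_forall_le_dist (hE : IsSpectralMeasure T E) (hΔ : MeasurableSet Δ)
    (h : ∀ t ∈ Δ, s ≤ dist l t) (hx : E Δ x = x) : s * ‖x‖ ≤ ‖T x - (l : ℂ) • x‖ := by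
  rcases Δ.eq_empty_or_nonempty with rfl | hne
  · simp [hE.eq_zero_of_map_empty_apply_eq hx]
  · exact (mul_le_mul_of_nonneg_right ((Metric.le_infDist hne).2 fun t ht => h t ht)
      (norm_nonneg x)).trans (hE.spectrum_loc Δ hΔ x hx l)

theorem reApplyInnerSelf_le_of_subset_Iic (hE : IsSpectralMeasure T E) (hΔ : MeasurableSet Δ)
    (h : Δ ⊆ Set.Iic β) (hx : E Δ x = x) : T.reApplyInnerSelf x ≤ β * ‖x‖ ^ 2 := by
  have form_nonneg : 0 ≤ RCLike.re ⟪-((T - algebraMap ℝ (H →L[ℂ] H) β) x), x⟫_ℂ := by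
    refine re_inner_nonneg_of_forall_mul_norm_le fun M _ => ?_
    have hdist (t : ℝ) (ht : t ∈ Δ) : M ≤ dist (β + M) t := by
      rw [Real.dist_eq]
      exact le_trans (by linarith [Set.mem_Iic.1 (h ht)]) (le_abs_self _)
    refine (hE.mul_norm_le_norm_of_forall_le_dist hΔ hdist hx).trans_eq ?_
    rw [← norm_neg]
    congr 1
    simp only [Complex.ofReal_add, add_smul, Complex.coe_smul, neg_sub,
      Algebra.algebraMap_eq_smul_one, sub_apply, smul_apply, one_apply_eq_self, Complex.real_smul,
      mul_one]
    abel
  have := reApplyInnerSelf_sub_algebraMap T β x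
  rw [inner_neg_left, map_neg] at form_nonneg
  rw [ContinuousLinearMap.reApplyInnerSelf_apply] at this
  linarith

theorem le_reApplyInnerSelf_of_subset_Ici (hE : IsSpectralMeasure T E) (hΔ : MeasurableSet Δ)
    (h : Δ ⊆ Set.Ici α) (hx : E Δ x = x) : α * ‖x‖ ^ 2 ≤ T.reApplyInnerSelf x := by
  have form_nonneg : 0 ≤ RCLike.re ⟪(T - algebraMap ℝ (H →L[ℂ] H) α) x, x⟫_ℂ := by
    refine re_inner_nonneg_of_forall_mul_norm_le fun M _ => ?_
    have hdist (t : ℝ) (ht : t ∈ Δ) : M ≤ dist (α - M) t := by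
      rw [dist_comm, Real.dist_eq]
      exact le_trans (by linarith [Set.mem_Ici.1 (h ht)]) (le_abs_self _)
    refine (hE.mul_norm_le_norm_of_forall_le_dist hΔ hdist hx).trans_eq ?_
    congr 1
    simp only [Complex.ofReal_sub, sub_smul, Complex.coe_smul, Algebra.algebraMap_eq_smul_one,
      sub_apply, smul_apply, one_apply_eq_self, Complex.real_smul, mul_one]
    abel
  have := reApplyInnerSelf_sub_algebraMap T α x
  rw [ContinuousLinearMap.reApplyInnerSelf_apply] at this
  linarith

theorem norm_sub_algebraMap_mul_map_le (hE : IsSpectralMeasure T E) (hT : IsSelfAdjoint T)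
    (hΔ : MeasurableSet Δ) (hs : 0 ≤ s) (h : Δ ⊆ Metric.closedBall l s) :
    ‖(T - algebraMap ℝ (H →L[ℂ] H) l) * E Δ‖ ≤ s := by
  refine norm_mul_le_of_abs_reApplyInnerSelf_le (hT.sub (.algebraMap _ (.all l)))
    (hE.isStarProjection hΔ) ((hE.commutes Δ hΔ).sub_left (Algebra.commutes _ _)) hs fun x hx => ?_
  rw [Real.closedBall_eq_Icc] at h
  have hle := hE.reApplyInnerSelf_le_of_subset_Iic hΔ (fun t ht => (h ht).2) hx
  have hge := hE.le_reApplyInnerSelf_of_subset_Ici hΔ (fun t ht => (h ht).1) hx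
  rw [reApplyInnerSelf_sub_algebraMap, abs_le]
  constructor <;> linarith

theorem exists_pos_map_ball_eq_zero (hE : IsSpectralMeasure T E) (hT : IsSelfAdjoint T)
    (hl : l ∉ spectrum ℝ T) : ∃ ε > 0, E (Metric.ball l ε) = 0 := by
  rw [spectrum.notMem_iff, ← neg_sub, IsUnit.neg_iff] at hl
  obtain ⟨W, hW⟩ := hl.exists_left_inv
  refine ⟨1 / (‖W‖ + 1), by positivity, ?_⟩
  set P := E (Metric.ball l (1 / (‖W‖ + 1)))
  have hP : ‖P‖ < 1 := by
    calc ‖P‖ = ‖W * ((T - algebraMap ℝ (H →L[ℂ] H) l) * P)‖ := by rw [← mul_assoc, hW, one_mul]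
      _ ≤ ‖W‖ * (1 / (‖W‖ + 1)) := norm_mul_le_of_le le_rfl <|
        hE.norm_sub_algebraMap_mul_map_le hT measurableSet_ball (by positivity)
          Metric.ball_subset_closedBall
      _ < 1 := by
        rw [mul_one_div, div_lt_one (by positivity)]
        exact lt_add_one _
  exact (isUnit_one_sub_of_norm_lt_one hP).mul_right_eq_zero.1
    (hE.isStarProjection measurableSet_ball).isIdempotentElem.one_sub_mul_self

theorem map_compl_spectrum (hE : IsSpectralMeasure T E) (hT : IsSelfAdjoint T) :
    E (spectrum ℝ T)ᶜ = 0 := by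
  choose! ε hε hεE using fun l => hE.exists_pos_map_ball_eq_zero (l := l) hT
  obtain ⟨t, htT, htc, hcover⟩ := TopologicalSpace.countable_cover_nhdsWithin
    (s := (spectrum ℝ T)ᶜ) fun l hl => mem_nhdsWithin_of_mem_nhds (Metric.ball_mem_nhds l (hε l hl))
  have hm : MeasurableSet (spectrum ℝ T)ᶜ := (spectrum.isClosed T).measurableSet.compl
  rcases t.eq_empty_or_nonempty with rfl | hne
  · simpa [hE.map_empty] using congrArg E (Set.subset_empty_iff.1 (by simpa using hcover))
  obtain ⟨u, rfl⟩ := htc.exists_eq_range hne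
  rw [Set.biUnion_range] at hcover
  exact hE.map_eq_zero_of_subset hm (.iUnion fun _ => measurableSet_ball) hcover
    (hE.map_iUnion_eq_zero (fun _ => measurableSet_ball) fun n => hεE _ (htT ⟨n, rfl⟩))

theorem map_inter_spectrum (hE : IsSpectralMeasure T E) (hT : IsSelfAdjoint T)
    (hΔ : MeasurableSet Δ) : E (Δ ∩ spectrum ℝ T) = E Δ := by
  have hm : MeasurableSet (spectrum ℝ T) := (spectrum.isClosed T).measurableSet
  have h := hE.map_compl hm
  rw [hE.map_compl_spectrum hT, eq_comm, sub_eq_zero] at h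
  rw [← hE.map_inter Δ _ hΔ hm, ← h, mul_one]

theorem map_congr (hE : IsSpectralMeasure T E) (hT : IsSelfAdjoint T) (hΔ : MeasurableSet Δ)
    (hΔ' : MeasurableSet Δ') (h : Δ ∩ spectrum ℝ T = Δ' ∩ spectrum ℝ T) : E Δ = E Δ' := by
  rw [← hE.map_inter_spectrum hT hΔ, h, hE.map_inter_spectrum hT hΔ']

theorem reApplyInnerSelf_le (hE : IsSpectralMeasure T E) (hT : IsSelfAdjoint T)
    (hΔ : MeasurableSet Δ) (h : ∀ t ∈ Δ ∩ spectrum ℝ T, t ≤ β) (hx : E Δ x = x) :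
    T.reApplyInnerSelf x ≤ β * ‖x‖ ^ 2 :=
  hE.reApplyInnerSelf_le_of_subset_Iic (hΔ.inter (spectrum.isClosed T).measurableSet) h
    ((congrArg (· x) (hE.map_inter_spectrum hT hΔ)).trans hx)

theorem le_reApplyInnerSelf (hE : IsSpectralMeasure T E) (hT : IsSelfAdjoint T)
    (hΔ : MeasurableSet Δ) (h : ∀ t ∈ Δ ∩ spectrum ℝ T, α ≤ t) (hx : E Δ x = x) :
    α * ‖x‖ ^ 2 ≤ T.reApplyInnerSelf x :=
  hE.le_reApplyInnerSelf_of_subset_Ici (hΔ.inter (spectrum.isClosed T).measurableSet) h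
    ((congrArg (· x) (hE.map_inter_spectrum hT hΔ)).trans hx)

theorem norm_sub_algebraMap_apply_le (hE : IsSpectralMeasure T E) (hT : IsSelfAdjoint T)
    (hΔ : MeasurableSet Δ) (hs : 0 ≤ s) (h : ∀ t ∈ Δ ∩ spectrum ℝ T, dist t l ≤ s)
    (hx : E Δ x = x) : ‖(T - algebraMap ℝ (H →L[ℂ] H) l) x‖ ≤ s * ‖x‖ := by
  have hle := ContinuousLinearMap.le_of_opNorm_le _
    (hE.norm_sub_algebraMap_mul_map_le hT (hΔ.inter (spectrum.isClosed T).measurableSet) hs h) x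
  rwa [hE.map_inter_spectrum hT hΔ, mul_apply_eq_comp, hx] at hle

theorem le_norm_sub_algebraMap_apply (hE : IsSpectralMeasure T E) (hT : IsSelfAdjoint T)
    (hΔ : MeasurableSet Δ) (h : ∀ t ∈ Δ ∩ spectrum ℝ T, s ≤ dist l t) (hx : E Δ x = x) :
    s * ‖x‖ ≤ ‖(T - algebraMap ℝ (H →L[ℂ] H) l) x‖ := by
  have hle := hE.mul_norm_le_norm_of_forall_le_dist
    (hΔ.inter (spectrum.isClosed T).measurableSet) h
    ((congrArg (· x) (hE.map_inter_spectrum hT hΔ)).trans hx)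
  simpa [Algebra.algebraMap_eq_smul_one] using hle

theorem separatesForm (hE : IsSpectralMeasure T E) (l : ℝ) :
    SeparatesForm T (E (Set.Ioi l)) l l where
  isStarProjection := hE.isStarProjection measurableSet_Ioi
  reApplyInnerSelf_le _ hx := hE.reApplyInnerSelf_le_of_subset_Iic measurableSet_Ioi.compl
    Set.compl_Ioi.subset (hE.map_compl_apply_of_apply_eq_zero measurableSet_Ioi hx)
  le_reApplyInnerSelf _ hx := hE.le_reApplyInnerSelf_of_subset_Ici measurableSet_Ioi
    Set.Ioi_subset_Ici_self hx

theorem map_eq_map_of_spectrum_eq_union {Δ₁ Δ₂ Δ : Set ℝ}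
    (hE : IsSpectralMeasure T E) (hT : IsSelfAdjoint T) (hΔ₁ : MeasurableSet Δ₁)
    (hΔ : MeasurableSet Δ) (hspec : spectrum ℝ T = Δ₁ ∪ Δ₂) (hsub : Δ₁ ⊆ Δ)
    (hdisj : Disjoint Δ Δ₂) : E Δ₁ = E Δ :=
  hE.map_congr hT hΔ₁ hΔ <| by
    rw [hspec, Set.inter_eq_left.2 Set.subset_union_left, Set.inter_union_distrib_left,
      Set.inter_eq_right.2 hsub, hdisj.inter_eq, Set.union_empty]

end IsSpectralMeasure

section OffDiagonalForm

variable {𝕜 H : Type*} [RCLike 𝕜] [NormedAddCommGroup H] [InnerProductSpace 𝕜 H]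

theorem reApplyInnerSelf_neg (T : H →L[𝕜] H) (x : H) :
    (-T).reApplyInnerSelf x = -T.reApplyInnerSelf x := by
  simp only [ContinuousLinearMap.reApplyInnerSelf_apply, neg_apply, inner_neg_left, map_neg]

variable [CompleteSpace H] {A V P : H →L[𝕜] H} {β δ d : ℝ} {x : H}

theorem inner_apply_apply_eq_zero_of_mul_mul_eq_zero (hP : IsStarProjection P)
    (hV : P * V * P = 0) (x : H) : ⟪V (P x), P x⟫_𝕜 = 0 := by
  rw [← hP.isSelfAdjoint.isSymmetric.apply_clm]
  simpa using congrArg (fun T : H →L[𝕜] H => ⟪T x, x⟫_𝕜) hV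

theorem reApplyInnerSelf_eq_add_of_commute (hP : IsStarProjection P) (hAP : Commute A P) (x : H) :
    A.reApplyInnerSelf x = A.reApplyInnerSelf (P x) + A.reApplyInnerSelf (x - P x) := by
  have hcross : ⟪A (P x), x⟫_𝕜 = ⟪A (P x), P x⟫_𝕜 := by
    have hAPx : A (P x) = P (A (P x)) := by
      nth_rw 1 [← isStarProjection_apply_apply hP x]
      exact congrArg (· (P x)) hAP.eq
    rw [hAPx, hP.isSelfAdjoint.isSymmetric.apply_clm, ← hAPx]
  have hcross' : ⟪A x, P x⟫_𝕜 = ⟪A (P x), P x⟫_𝕜 := by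
    have hAPx : A (P x) = P (A x) := congrArg (· x) hAP.eq
    rw [hAPx, hP.isSelfAdjoint.isSymmetric.apply_clm, isStarProjection_apply_apply hP]
  simp only [ContinuousLinearMap.reApplyInnerSelf_apply, map_sub, inner_sub_left, inner_sub_right,
    hcross, hcross']
  ring

theorem reApplyInnerSelf_le_of_mul_mul_eq_zero (hP : IsStarProjection P) (hV : P * V * P = 0)
    (hV' : (1 - P) * V * (1 - P) = 0) (x : H) :
    V.reApplyInnerSelf x ≤ 2 * ‖V‖ * (‖P x‖ * ‖x - P x‖) := by
  have hp := inner_apply_apply_eq_zero_of_mul_mul_eq_zero hP hV x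
  have hn : ⟪V (x - P x), x - P x⟫_𝕜 = 0 :=
    inner_apply_apply_eq_zero_of_mul_mul_eq_zero hP.one_sub hV' x
  have hcross (y z : H) : RCLike.re ⟪V y, z⟫_𝕜 ≤ ‖V‖ * ‖y‖ * ‖z‖ :=
    (re_inner_le_norm _ _).trans (by gcongr; exact V.le_opNorm y)
  have hsplit : V.reApplyInnerSelf x =
      RCLike.re ⟪V (P x), x - P x⟫_𝕜 + RCLike.re ⟪V (x - P x), P x⟫_𝕜 := by
    rw [ContinuousLinearMap.reApplyInnerSelf_apply]
    nth_rw 1 2 [← add_sub_cancel (P x) x]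
    rw [map_add, inner_add_left, inner_add_right, inner_add_right, hp, hn, zero_add, add_zero,
      map_add]
  linarith [hcross (P x) (x - P x), hcross (x - P x) (P x)]

theorem reApplyInnerSelf_add_le (hP : IsStarProjection P) (hAP : Commute A P)
    (hV : P * V * P = 0) (hV' : (1 - P) * V * (1 - P) = 0) (hδ : 0 ≤ δ) (hδd : 0 ≤ δ + d)
    (hVδ : ‖V‖ ^ 2 ≤ δ * (δ + d)) (hp : A.reApplyInnerSelf (P x) ≤ β * ‖P x‖ ^ 2)
    (hn : A.reApplyInnerSelf (x - P x) ≤ (β - d) * ‖x - P x‖ ^ 2) :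
    (A + V).reApplyInnerSelf x ≤ (β + δ) * ‖x‖ ^ 2 := by
  have young : 2 * ‖V‖ * (‖P x‖ * ‖x - P x‖) ≤ δ * ‖P x‖ ^ 2 + (δ + d) * ‖x - P x‖ ^ 2 := by
    calc 2 * ‖V‖ * (‖P x‖ * ‖x - P x‖) ≤ 2 * √(δ * (δ + d)) * (‖P x‖ * ‖x - P x‖) := by
          gcongr
          exact Real.le_sqrt_of_sq_le hVδ
      _ = 2 * (√δ * ‖P x‖) * (√(δ + d) * ‖x - P x‖) := by
          rw [Real.sqrt_mul hδ]
          ring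
      _ ≤ (√δ * ‖P x‖) ^ 2 + (√(δ + d) * ‖x - P x‖) ^ 2 := two_mul_le_add_sq _ _
      _ = _ := by rw [mul_pow, mul_pow, Real.sq_sqrt hδ, Real.sq_sqrt hδd]
  have hadd : (A + V).reApplyInnerSelf x = A.reApplyInnerSelf x + V.reApplyInnerSelf x := by
    simp only [ContinuousLinearMap.reApplyInnerSelf_apply, add_apply, inner_add_left, map_add]
  rw [hadd, ← norm_apply_sq_add_norm_sub_apply_sq hP, reApplyInnerSelf_eq_add_of_commute hP hAP]
  linarith [reApplyInnerSelf_le_of_mul_mul_eq_zero hP hV hV' x]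

end OffDiagonalForm

namespace SeparatesForm

variable {H : Type*} [NormedAddCommGroup H] [InnerProductSpace ℂ H] [CompleteSpace H]
  {S A V E P : H →L[ℂ] H} {α β δ d : ℝ}

theorem neg_one_sub (h : SeparatesForm S E α β) : SeparatesForm (-S) (1 - E) (-β) (-α) := by
  refine ⟨h.isStarProjection.one_sub, fun x hx => ?_, fun x hx => ?_⟩ <;>
    rw [reApplyInnerSelf_neg, neg_mul, neg_le_neg_iff]
  · exact h.le_reApplyInnerSelf x (sub_eq_zero.1 hx).symm
  · exact h.reApplyInnerSelf_le x (sub_eq_self.1 hx)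

theorem of_offDiagonal (hE : IsStarProjection E) (hP : IsStarProjection P) (hPE : P * E = 0)
    (hAP : Commute A P) (hV : P * V * P = 0) (hV' : (1 - P) * V * (1 - P) = 0)
    (hδ : 0 ≤ δ) (hδd : 0 ≤ δ + d) (hVδ : ‖V‖ ^ 2 ≤ δ * (δ + d))
    (hupper : ∀ x, E x = x → (β + d) * ‖x‖ ^ 2 ≤ A.reApplyInnerSelf x)
    (hmiddle : ∀ x, P x = x → A.reApplyInnerSelf x ≤ β * ‖x‖ ^ 2)
    (hlower : ∀ x, P x = 0 → E x = 0 → A.reApplyInnerSelf x ≤ (β - d) * ‖x‖ ^ 2) :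
    SeparatesForm (A + V) E (β + δ) (β + d) := by
  refine ⟨hE, fun x hx => ?_, fun x hx => ?_⟩
  · have hEP : E * P = 0 := by
      simpa [hE.isSelfAdjoint.star_eq, hP.isSelfAdjoint.star_eq] using congrArg star hPE
    have hEPx : E (P x) = 0 := congrArg (· x) hEP
    exact reApplyInnerSelf_add_le hP hAP hV hV' hδ hδd hVδ
      (hmiddle _ (isStarProjection_apply_apply hP x))
      (hlower _ (by rw [map_sub, isStarProjection_apply_apply hP, sub_self])
        (by rw [map_sub, hx, hEPx, sub_zero]))
  · have hPx : P x = 0 := hx ▸ congrArg (· x) hPE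
    have hVx : ⟪V x, x⟫_ℂ = 0 := by
      simpa [hPx] using inner_apply_apply_eq_zero_of_mul_mul_eq_zero hP.one_sub hV' x
    refine (hupper x hx).trans_eq ?_
    simp only [ContinuousLinearMap.reApplyInnerSelf_apply, add_apply, inner_add_left, hVx, add_zero]

end SeparatesForm

section Perturbation

open Set

theorem exists_subset_Icc_of_convexHull_disjoint {σ Sig : Set ℝ} (hσ : IsCompact σ)
    (hconv : Disjoint (convexHull ℝ σ) Sig) {d : ℝ} (hd : d = sInf (image2 dist σ Sig))
    (hd0 : 0 < d) : ∃ a ∈ σ, ∃ b ∈ σ, σ ⊆ Icc a b ∧ Sig ⊆ Iic (a - d) ∪ Ici (b + d) := by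
  have hne : σ.Nonempty := by
    rw [nonempty_iff_ne_empty]
    rintro rfl
    rw [image2_empty_left, Real.sInf_empty] at hd
    exact hd0.ne' hd
  obtain ⟨a, haσ, ha⟩ := hσ.exists_isLeast hne
  obtain ⟨b, hbσ, hb⟩ := hσ.exists_isGreatest hne
  refine ⟨a, haσ, b, hbσ, fun t ht => ⟨ha ht, hb ht⟩, fun τ hτ => ?_⟩
  have le_dist {t : ℝ} (ht : t ∈ σ) : d ≤ |t - τ| := by
    rw [hd, ← Real.dist_eq]
    refine csInf_le ⟨0, ?_⟩ (mem_image2_of_mem ht hτ)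
    rintro _ ⟨_, _, _, _, rfl⟩
    exact dist_nonneg
  have hτab : τ ∉ Icc a b := fun h => by
    rw [← segment_eq_Icc (ha hbσ)] at h
    exact disjoint_left.1 hconv (segment_subset_convexHull haσ hbσ h) hτ
  rcases lt_or_ge τ a with hτa | haτ
  · have := le_dist haσ
    rw [abs_of_pos (sub_pos.2 hτa)] at this
    exact Or.inl (le_sub_comm.1 this)
  · have hbτ : b < τ := not_le.1 fun h => hτab ⟨haτ, h⟩
    have := le_dist hbσ
    rw [abs_of_neg (sub_neg.2 hbτ), neg_sub] at this
    exact Or.inr (le_sub_iff_add_le'.1 this)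

theorem disjoint_Icc_Iic_union_Ici {a b d : ℝ} (hd : 0 < d) :
    Disjoint (Icc a b) (Iic (a - d) ∪ Ici (b + d)) :=
  disjoint_left.2 fun t ⟨hat, htb⟩ ht => by
    rcases ht with h | h
    exacts [by linarith [mem_Iic.1 h], by linarith [mem_Ici.1 h]]

/-- The spectrum of `A` in `[a, b]` is separated from the rest of the spectrum by gaps of length
`d` on both sides, and `V` is off-diagonal with respect to the spectral projection `E [a, b]`. -/
structure IsOffDiagonal {H : Type*} [NormedAddCommGroup H] [InnerProductSpace ℂ H]
    [CompleteSpace H] (A V : H →L[ℂ] H) (E : Set ℝ → H →L[ℂ] H) (a b d : ℝ) : Prop where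
  isSelfAdjoint : IsSelfAdjoint A
  isSelfAdjoint_perturbation : IsSelfAdjoint V
  isSpectralMeasure : IsSpectralMeasure A E
  le : a ≤ b
  gap_pos : 0 < d
  spectrum_subset : spectrum ℝ A ⊆ Iic (a - d) ∪ Icc a b ∪ Ici (b + d)
  mul_mul_eq_zero : E (Icc a b) * V * E (Icc a b) = 0
  one_sub_mul_mul_eq_zero : (1 - E (Icc a b)) * V * (1 - E (Icc a b)) = 0

namespace IsOffDiagonal

variable {H : Type*} [NormedAddCommGroup H] [InnerProductSpace ℂ H] [CompleteSpace H]
  {A V : H →L[ℂ] H} {E F : Set ℝ → H →L[ℂ] H} {a b d δ l s : ℝ} {x : H}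

theorem isSelfAdjoint_add (h : IsOffDiagonal A V E a b d) : IsSelfAdjoint (A + V) :=
  h.isSelfAdjoint.add h.isSelfAdjoint_perturbation

theorem isStarProjection (h : IsOffDiagonal A V E a b d) : IsStarProjection (E (Icc a b)) :=
  h.isSpectralMeasure.isStarProjection measurableSet_Icc

theorem commute (h : IsOffDiagonal A V E a b d) : Commute A (E (Icc a b)) :=
  h.isSpectralMeasure.commutes _ measurableSet_Icc

theorem le_sub_of_lt (h : IsOffDiagonal A V E a b d) (ht : l ∈ spectrum ℝ A) (hla : l < a) :
    l ≤ a - d := by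
  rcases h.spectrum_subset ht with (h' | h') | h'
  exacts [h', absurd hla h'.1.not_gt, by linarith [h.le, h.gap_pos, mem_Ici.1 h']]

theorem add_le_of_lt (h : IsOffDiagonal A V E a b d) (ht : l ∈ spectrum ℝ A) (hbl : b < l) :
    b + d ≤ l := by
  rcases h.spectrum_subset ht with (h' | h') | h'
  exacts [by linarith [h.le, h.gap_pos, mem_Iic.1 h'], absurd hbl h'.2.not_gt, h']

theorem map_Iio_apply_eq (h : IsOffDiagonal A V E a b d) (hx : E (Icc a b) x = 0)
    (hx' : E (Ioi b) x = 0) : E (Iio a) x = x := by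
  rw [← compl_Ici]
  refine h.isSpectralMeasure.map_compl_apply_of_apply_eq_zero measurableSet_Ici ?_
  rw [← Icc_union_Ioi_eq_Ici h.le, h.isSpectralMeasure.map_union measurableSet_Icc
    measurableSet_Ioi (disjoint_left.2 fun t ht => ht.2.not_gt), add_apply, hx, hx', add_zero]

theorem map_Ioi_apply_eq (h : IsOffDiagonal A V E a b d) (hx : E (Icc a b) x = 0)
    (hx' : E (Iio a) x = 0) : E (Ioi b) x = x := by
  rw [← compl_Iic]
  refine h.isSpectralMeasure.map_compl_apply_of_apply_eq_zero measurableSet_Iic ?_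
  rw [← Iio_union_Icc_eq_Iic h.le, h.isSpectralMeasure.map_union measurableSet_Iio
    measurableSet_Icc (disjoint_left.2 fun t ht ht' => ht'.1.not_gt ht), add_apply, hx, hx',
    add_zero]

theorem add_mul_norm_le_norm_apply (h : IsOffDiagonal A V E a b d) (hla : s ≤ l - a)
    (hlb : s ≤ b - l) (hx : E (Icc a b) x = 0) :
    (s + d) * ‖x‖ ≤ ‖(A - algebraMap ℝ (H →L[ℂ] H) l) x‖ := by
  refine h.isSpectralMeasure.le_norm_sub_algebraMap_apply h.isSelfAdjoint measurableSet_Icc.compl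
    (fun t ⟨ht, hts⟩ => ?_)
    (h.isSpectralMeasure.map_compl_apply_of_apply_eq_zero measurableSet_Icc hx)
  rw [Real.dist_eq, le_abs]
  rcases lt_or_ge t a with hta | hta
  · exact Or.inl (by linarith [h.le_sub_of_lt hts hta])
  · exact Or.inr (by linarith [h.add_le_of_lt hts (not_le.1 fun htb => ht ⟨hta, htb⟩)])

theorem separatesForm_Ioi (h : IsOffDiagonal A V E a b d) (hδ : 0 ≤ δ)
    (hVδ : ‖V‖ ^ 2 ≤ δ * (δ + d)) : SeparatesForm (A + V) (E (Ioi b)) (b + δ) (b + d) := by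
  have hE := h.isSpectralMeasure
  have hA := h.isSelfAdjoint
  have hPE : E (Icc a b) * E (Ioi b) = 0 := hE.map_mul_map_of_disjoint measurableSet_Icc
    measurableSet_Ioi (disjoint_left.2 fun t ht => ht.2.not_gt)
  refine .of_offDiagonal (hE.isStarProjection measurableSet_Ioi) h.isStarProjection hPE h.commute
    h.mul_mul_eq_zero h.one_sub_mul_mul_eq_zero hδ (by linarith [h.gap_pos]) hVδ
    (fun x hx => ?_) (fun x hx => ?_) (fun x hP hU => ?_)
  · exact hE.le_reApplyInnerSelf hA measurableSet_Ioi (fun t ht => h.add_le_of_lt ht.2 ht.1) hx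
  · exact hE.reApplyInnerSelf_le hA measurableSet_Icc (fun t ht => ht.1.2) hx
  · exact hE.reApplyInnerSelf_le hA measurableSet_Iio
      (fun t ht => by linarith [h.le, h.le_sub_of_lt ht.2 ht.1]) (h.map_Iio_apply_eq hP hU)

theorem separatesForm_Ici (h : IsOffDiagonal A V E a b d) (hδ : 0 ≤ δ)
    (hVδ : ‖V‖ ^ 2 ≤ δ * (δ + d)) : SeparatesForm (A + V) (E (Ici a)) (a - d) (a - δ) := by
  have hE := h.isSpectralMeasure
  have hA := h.isSelfAdjoint
  have hPE : E (Icc a b) * E (Iio a) = 0 := hE.map_mul_map_of_disjoint measurableSet_Icc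
    measurableSet_Iio (disjoint_left.2 fun t ht => ht.1.not_gt)
  have reflected : SeparatesForm (-A + -V) (E (Iio a)) (-a + δ) (-a + d) := by
    refine .of_offDiagonal (hE.isStarProjection measurableSet_Iio) h.isStarProjection hPE
      h.commute.neg_left (by simpa only [mul_neg, neg_mul, neg_eq_zero] using h.mul_mul_eq_zero)
      (by simpa only [mul_neg, neg_mul, neg_eq_zero] using h.one_sub_mul_mul_eq_zero)
      hδ (by linarith [h.gap_pos]) (by rwa [norm_neg])
      (fun x hx => ?_) (fun x hx => ?_) (fun x hP hN => ?_) <;> rw [reApplyInnerSelf_neg]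
    · linarith [hE.reApplyInnerSelf_le hA measurableSet_Iio
        (fun t ht => h.le_sub_of_lt ht.2 ht.1) hx]
    · linarith [hE.le_reApplyInnerSelf hA measurableSet_Icc (fun t ht => ht.1.1) hx]
    · linarith [hE.le_reApplyInnerSelf (α := a + d) hA measurableSet_Ioi
        (fun t ht => by linarith [h.le, h.add_le_of_lt ht.2 ht.1]) (h.map_Ioi_apply_eq hP hN)]
  have hcompl : E (Ici a) = 1 - E (Iio a) := by rw [← hE.map_compl measurableSet_Iio, compl_Iio]
  convert reflected.neg_one_sub using 1 <;> first | exact hcompl | abel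

theorem mem_Icc_of_mem_spectrum_add (h : IsOffDiagonal A V E a b d) (hδ : 0 ≤ δ)
    (hVδ : ‖V‖ ^ 2 ≤ δ * (δ + d)) (hl : l ∈ spectrum ℝ (A + V)) (hl' : l ∈ Ioo (a - d) (b + d)) :
    l ∈ Icc (a - δ) (b + δ) := by
  constructor <;> by_contra! hlt
  · exact (h.separatesForm_Ici hδ hVδ).notMem_spectrum h.isSelfAdjoint_add ⟨hl'.1, hlt⟩ hl
  · exact (h.separatesForm_Ioi hδ hVδ).notMem_spectrum h.isSelfAdjoint_add ⟨hlt, hl'.2⟩ hl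

theorem exists_dist_lt_of_mem_spectrum_add (h : IsOffDiagonal A V E a b d)
    (hab : {a, b} ⊆ spectrum ℝ A) (hVd : ‖V‖ ^ 2 < 2 * d ^ 2) (hl : l ∈ spectrum ℝ (A + V))
    (hl' : l ∈ Icc a b) : ∃ t ∈ spectrum ℝ A ∩ Icc a b, dist l t < d := by
  by_contra! hfar
  have ha := hfar a ⟨hab (by simp), left_mem_Icc.2 h.le⟩
  have hb := hfar b ⟨hab (by simp), right_mem_Icc.2 h.le⟩
  rw [Real.dist_eq, abs_of_nonneg (by linarith [hl'.1])] at ha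
  rw [Real.dist_eq, abs_of_nonpos (by linarith [hl'.2]), neg_sub] at hb
  obtain ⟨m, hm, hle⟩ := exists_pos_mul_norm_le_norm_add_apply
    (A := A - algebraMap ℝ (H →L[ℂ] H) l) h.isStarProjection
    (h.commute.sub_left (Algebra.commutes _ _)) h.mul_mul_eq_zero h.one_sub_mul_mul_eq_zero
    h.gap_pos (fun x => h.isSpectralMeasure.le_norm_sub_algebraMap_apply h.isSelfAdjoint
      measurableSet_Icc fun t ht => hfar t ht.symm)
    (fun x => h.add_mul_norm_le_norm_apply ha hb) (by linarith)
  refine notMem_spectrum_of_le_norm_apply h.isSelfAdjoint_add hm (fun x => ?_) hl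
  rw [add_sub_right_comm]
  exact hle x

theorem norm_one_sub_map_mul_map_lt_one (h : IsOffDiagonal A V E a b d)
    (hF : IsSpectralMeasure (A + V) F) (hδ : 0 ≤ δ) (hδd : δ < d) (hVδ : ‖V‖ ^ 2 ≤ δ * (δ + d)) :
    ‖(1 - F (Icc (a - δ) (b + δ))) * E (Icc a b)‖ < 1 := by
  have hE := h.isSpectralMeasure
  obtain ⟨m, hm⟩ := exists_between (by linarith : a - d < a - δ)
  obtain ⟨M, hM⟩ := exists_between (by linarith : b + δ < b + d)
  have hba : Ioi b ⊆ Ici a := fun t ht => h.le.trans (mem_Ioi.1 ht).le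
  have hMm : Ioi M ⊆ Ioi m := Ioi_subset_Ioi (by linarith [hm.2, hM.1, h.le])
  have hE_sub : E (Icc a b) = E (Ici a) - E (Ioi b) := by
    rw [← hE.map_sdiff measurableSet_Ioi measurableSet_Ici hba, sdiff_eq, compl_Ioi, Ici_inter_Iic]
  have hF_sub : F (Icc (a - δ) (b + δ)) = F (Ioi m) - F (Ioi M) := by
    rw [← hF.map_sdiff measurableSet_Ioi measurableSet_Ioi hMm, Ioi_sdiff_Ioi]
    refine hF.map_congr h.isSelfAdjoint_add measurableSet_Icc measurableSet_Ioc
      (Set.ext fun t => and_congr_left fun ht => ⟨fun hI => ?_, fun hI => ?_⟩)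
    · exact ⟨hm.2.trans_le hI.1, hI.2.trans hM.1.le⟩
    · exact h.mem_Icc_of_mem_spectrum_add hδ hVδ ht ⟨hm.1.trans hI.1, hI.2.trans_lt hM.2⟩
  have upper : ‖E (Ioi b) - F (Ioi M)‖ ^ 2 < 1 / 2 :=
    (h.separatesForm_Ioi hδ hVδ).norm_sub_sq_lt_half (hF.separatesForm M) h.isSelfAdjoint_add
      (hF.commutes _ measurableSet_Ioi) hM
  have lower : ‖E (Ici a) - F (Ioi m)‖ ^ 2 < 1 / 2 :=
    (h.separatesForm_Ici hδ hVδ).norm_sub_sq_lt_half (hF.separatesForm m) h.isSelfAdjoint_add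
      (hF.commutes _ measurableSet_Ioi) hm
  have hle := norm_one_sub_sub_mul_sub_sq_le
    (hE.isStarProjection measurableSet_Ioi) (hE.isStarProjection measurableSet_Ici)
    (hE.map_mul_map_of_subset measurableSet_Ioi measurableSet_Ici hba)
    (hF.isStarProjection measurableSet_Ioi)
    (hF.map_mul_map_of_subset measurableSet_Ioi measurableSet_Ioi hMm)
  rw [hE_sub, hF_sub]
  exact (sq_lt_one_iff₀ (norm_nonneg _)).1 (by linarith)

theorem norm_one_sub_map_mul_map_le_sin_arctan (h : IsOffDiagonal A V E a b d)
    (hF : IsSpectralMeasure (A + V) F) (hδ : 0 ≤ δ) (hδd : δ < d) :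
    ‖(1 - E (Icc a b)) * F (Icc (a - δ) (b + δ))‖ ≤ Real.sin (Real.arctan (‖V‖ / (d - δ))) := by
  have hab := h.le
  set c := (a + b) / 2 with hc
  set r := (b - a) / 2 with hr
  rw [← add_sub_add_left_eq_sub d δ r]
  refine norm_one_sub_mul_le_sin_arctan (A := A - algebraMap ℝ (H →L[ℂ] H) c)
    h.isStarProjection (hF.isStarProjection measurableSet_Icc)
    (h.commute.sub_left (Algebra.commutes _ _)) ?_ h.one_sub_mul_mul_eq_zero (by linarith)
    (by linarith) (fun x => h.add_mul_norm_le_norm_apply (by linarith) (by linarith))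
    (fun x hx => ?_) <;> rw [sub_add_eq_add_sub]
  · exact (hF.commutes _ measurableSet_Icc).sub_left (Algebra.commutes _ _)
  · refine hF.norm_sub_algebraMap_apply_le h.isSelfAdjoint_add measurableSet_Icc (by linarith)
      (fun t ht => ?_) hx
    rw [Real.dist_eq, abs_le]
    exact ⟨by linarith [ht.1.1], by linarith [ht.1.2]⟩

theorem norm_map_sub_map_le_sin_arctan (h : IsOffDiagonal A V E a b d)
    (hF : IsSpectralMeasure (A + V) F) (hδ : 0 ≤ δ) (hδd : δ < d) (hVδ : ‖V‖ ^ 2 ≤ δ * (δ + d)) :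
    ‖E (Icc a b) - F (Icc (a - δ) (b + δ))‖ ≤ Real.sin (Real.arctan (‖V‖ / (d - δ))) :=
  (norm_sub_le_norm_one_sub_mul h.isStarProjection (hF.isStarProjection measurableSet_Icc)
    (h.norm_one_sub_map_mul_map_lt_one hF hδ hδd hVδ)).trans
    (h.norm_one_sub_map_mul_map_le_sin_arctan hF hδ hδd)

theorem of_spectrum_eq_union {σ Sig : Set ℝ} (hE : IsSpectralMeasure A E) (hA : IsSelfAdjoint A)
    (hV : IsSelfAdjoint V) (hσ : MeasurableSet σ) (hSig : MeasurableSet Sig)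
    (hspec : spectrum ℝ A = σ ∪ Sig) (hab : a ≤ b) (hd : 0 < d) (hσab : σ ⊆ Icc a b)
    (hSigab : Sig ⊆ Iic (a - d) ∪ Ici (b + d)) (hoffσ : E σ * V * E σ = 0)
    (hoffSig : E Sig * V * E Sig = 0) : IsOffDiagonal A V E a b d := by
  have hdisj : Disjoint (Icc a b) Sig := (disjoint_Icc_Iic_union_Ici hd).mono_right hSigab
  have hEσ : E σ = E (Icc a b) :=
    hE.map_eq_map_of_spectrum_eq_union hA hσ measurableSet_Icc hspec hσab hdisj
  have hESig : E Sig = 1 - E (Icc a b) := by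
    rw [← hE.map_compl measurableSet_Icc]
    exact hE.map_eq_map_of_spectrum_eq_union hA hSig measurableSet_Icc.compl
      (hspec.trans (union_comm _ _)) (subset_compl_iff_disjoint_left.2 hdisj)
      (disjoint_compl_left_iff_subset.2 hσab)
  refine ⟨hA, hV, hE, hab, hd, ?_, hEσ ▸ hoffσ, hESig ▸ hoffSig⟩
  rw [hspec, union_right_comm, union_comm σ]
  exact union_subset_union hSigab hσab

theorem map_thickening_eq (h : IsOffDiagonal A V E a b d) (hF : IsSpectralMeasure (A + V) F)
    (hab : {a, b} ⊆ spectrum ℝ A) (hVd : ‖V‖ ^ 2 < 2 * d ^ 2) (hδ : 0 ≤ δ) (hδd : δ < d)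
    (hVδ : ‖V‖ ^ 2 ≤ δ * (δ + d)) :
    F (Metric.thickening d (spectrum ℝ A ∩ Icc a b)) = F (Icc (a - δ) (b + δ)) := by
  refine hF.map_congr h.isSelfAdjoint_add Metric.isOpen_thickening.measurableSet
    measurableSet_Icc (Set.ext fun l => and_congr_left fun hl => ?_)
  rw [Metric.mem_thickening_iff]
  constructor
  · rintro ⟨t, ⟨-, hat, htb⟩, hlt⟩
    rw [Real.dist_eq, abs_lt] at hlt
    exact h.mem_Icc_of_mem_spectrum_add hδ hVδ hl ⟨by linarith, by linarith⟩
  · rintro ⟨hal, hlb⟩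
    rcases lt_or_ge l a with hla | hla
    · refine ⟨a, ⟨hab (by simp), left_mem_Icc.2 h.le⟩, ?_⟩
      rw [Real.dist_eq, abs_of_neg (sub_neg.2 hla)]
      linarith
    rcases lt_or_ge b l with hbl | hbl
    · refine ⟨b, ⟨hab (by simp), right_mem_Icc.2 h.le⟩, ?_⟩
      rw [Real.dist_eq, abs_of_pos (sub_pos.2 hbl)]
      linarith
    · exact h.exists_dist_lt_of_mem_spectrum_add hab hVd hl ⟨hla, hbl⟩

end IsOffDiagonal

theorem norm_diff_projections_le_sin_arctan_of_convexHull_disjoint_general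
    {H : Type*} [NormedAddCommGroup H] [InnerProductSpace ℂ H] [CompleteSpace H]
    (A V : H →L[ℂ] H) (hA : IsSelfAdjoint A) (hV : IsSelfAdjoint V)
    (σ Sig : Set ℝ) (hσc : IsClosed σ) (hSigc : IsClosed Sig)
    (hspec : spectrum ℝ A = σ ∪ Sig)
    (d : ℝ) (hd : d = sInf (Set.image2 dist σ Sig)) (hd0 : 0 < d)
    (EA EB : Set ℝ → H →L[ℂ] H) (hEA : IsSpectralMeasure A EA)
    (hEB : IsSpectralMeasure (A + V) EB)
    (hoff₁ : EA σ * V * EA σ = 0) (hoff₂ : EA Sig * V * EA Sig = 0)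
    (hconv : Disjoint (convexHull ℝ σ) Sig)
    (δ : ℝ) (hδ : δ = ‖V‖ * Real.tan (Real.arctan (2 * ‖V‖ / d) / 2))
    (hnorm : ‖V‖ < Real.sqrt 2 * d) :
    ‖EA σ - EB (Metric.thickening d σ)‖ ≤ Real.sin (Real.arctan (‖V‖ / (d - δ))) ∧
    Real.sin (Real.arctan (‖V‖ / (d - δ))) < 1 := by
  have hσA : σ ⊆ spectrum ℝ A := hspec ▸ subset_union_left
  obtain ⟨a, ha, b, hb, hσab, hSigab⟩ := exists_subset_Icc_of_convexHull_disjoint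
    ((spectrum.isCompact A).of_isClosed_subset hσc hσA) hconv hd hd0
  have hdisj : Disjoint (Icc a b) Sig := (disjoint_Icc_Iic_union_Ici hd0).mono_right hSigab
  have hσ : σ = spectrum ℝ A ∩ Icc a b := by
    rw [hspec, union_inter_distrib_right, inter_eq_left.2 hσab, hdisj.symm.inter_eq, union_empty]
  have hoff : IsOffDiagonal A V EA a b d := .of_spectrum_eq_union hEA hA hV hσc.measurableSet
    hSigc.measurableSet hspec (hσab ha).2 hd0 hσab hSigab hoff₁ hoff₂
  have hVd : ‖V‖ ^ 2 < 2 * d ^ 2 := by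
    simpa only [mul_pow, Real.sq_sqrt zero_le_two] using
      pow_lt_pow_left₀ hnorm (norm_nonneg V) two_ne_zero
  have hδ0 : 0 ≤ δ := hδ ▸ mul_tan_half_arctan_nonneg (norm_nonneg V) hd0.le
  have hδV : δ * (δ + d) = ‖V‖ ^ 2 := mul_tan_half_arctan_mul_add hd0.ne' hδ
  have hδd : δ < d := by nlinarith
  have hEA_σ : EA σ = EA (Icc a b) := hEA.map_eq_map_of_spectrum_eq_union hA hσc.measurableSet
    measurableSet_Icc hspec hσab hdisj
  have hEB_thickening : EB (Metric.thickening d σ) = EB (Icc (a - δ) (b + δ)) := by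
    rw [hσ]
    exact hoff.map_thickening_eq hEB (insert_subset (hσA ha) (singleton_subset_iff.2 (hσA hb)))
      hVd hδ0 hδd hδV.ge
  rw [hEA_σ, hEB_thickening]
  exact ⟨hoff.norm_map_sub_map_le_sin_arctan hEB hδ0 hδd hδV.ge, sin_arctan_lt_one _⟩

end Perturbation

/-- **Theorem B (ii) / Theorem 2.9.** If the convex hull of `σ` does not intersect `Σ` and
`‖V‖ < √2 d`, then `‖E_A(σ) − E_B(O_d(σ))‖ ≤ sin(arctan(‖V‖/(d − δ_V))) < 1`, where
`δ_V = ‖V‖ tan((1/2) arctan(2‖V‖/d))`. -/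
theorem norm_diff_projections_le_sin_arctan_of_convexHull_disjoint
    {H : Type*} [NormedAddCommGroup H] [InnerProductSpace ℂ H] [CompleteSpace H]
    [TopologicalSpace.SeparableSpace H]
    (A V B : H →L[ℂ] H) (hA : IsSelfAdjoint A) (hV : IsSelfAdjoint V) (hB : B = A + V)
    (σ Sig : Set ℝ) (hσc : IsClosed σ) (hSigc : IsClosed Sig) (hdisj : Disjoint σ Sig)
    (hspec : spectrum ℝ A = σ ∪ Sig)
    (d : ℝ) (hd : d = sInf (Set.image2 dist σ Sig)) (hd0 : 0 < d)
    (EA EB : Set ℝ → H →L[ℂ] H) (hEA : IsSpectralMeasure A EA) (hEB : IsSpectralMeasure B EB)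
    (hoff₁ : EA σ * V * EA σ = 0) (hoff₂ : EA Sig * V * EA Sig = 0)
    (hconv : Disjoint (convexHull ℝ σ) Sig)
    (δ : ℝ) (hδ : δ = ‖V‖ * Real.tan (Real.arctan (2 * ‖V‖ / d) / 2))
    (hnorm : ‖V‖ < Real.sqrt 2 * d) :
    ‖EA σ - EB (Metric.thickening d σ)‖ ≤ Real.sin (Real.arctan (‖V‖ / (d - δ))) ∧
    Real.sin (Real.arctan (‖V‖ / (d - δ))) < 1 := by
  subst hB
  exact norm_diff_projections_le_sin_arctan_of_convexHull_disjoint_general A V hA hV σ Sig hσc hSigc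
    hspec d hd hd0 EA EB hEA hEB hoff₁ hoff₂ hconv δ hδ hnorm
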